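/- Assume δ > 0, P > 0 and λ ≥ 0 are fixed (with δ > 1 if λ = 0), and for each ρ > 0 let (β*(ρ), τ*(ρ)) be the unique saddle point of max_{β ≥ 0} min_{τ > 0} D(β,τ) with parameter ρ. Then, as ρ → ∞, τ*(ρ) = √(ρ/δ) + P/(2√(δρ)) + O(1/ρ) and β*(ρ) = 2√(ρδ) − 2√(2P)/√π + O(1/√ρ); that is, there exist constants C > 0 and ρ₀ > 0 such that for all ρ ≥ ρ₀, |τ*(ρ) − √(ρ/δ) − P/(2√(δρ))| ≤ C/ρ and |β*(ρ) − 2√(ρδ) + 2√(2P)/√π| ≤ C/√ρ. -/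

import Mathlib

open MeasureTheory ProbabilityTheory Filter

noncomputable section

/-- Standard Gaussian `N(0,1)` measure on `ℝ`. -/
def stdGaussian : Measure ℝ := ProbabilityTheory.gaussianReal 0 1

/-- `Yfun P lam β τ = (β/α)·(E[(H − √P·α)²·1{H ≥ √P·α}] − 1/2)` with `α = 1/τ + 2λ/β`. -/
def Yfun (P lam β τ : ℝ) : ℝ :=
  (β / (1 / τ + 2 * lam / β)) *
    ((∫ h in Set.Ici (Real.sqrt P * (1 / τ + 2 * lam / β)),
        (h - Real.sqrt P * (1 / τ + 2 * lam / β)) ^ 2 ∂stdGaussian) - 1 / 2)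

/-- `D(β,τ) = τβδ/2 + ρβ/(2τ) − β²/4 + Y(β,τ)`, with the convention `D(0,τ) = 0`. -/
def Dfun (δ ρ P lam β τ : ℝ) : ℝ :=
  if β = 0 then 0
  else τ * β * δ / 2 + ρ * β / (2 * τ) - β ^ 2 / 4 + Yfun P lam β τ

/-- `(βs, τs)` is a saddle point of `max_{β ≥ 0} min_{τ > 0} D(β, τ)`:
`D(β,τs) ≤ D(βs,τs) ≤ D(βs,τ)` for all `β ≥ 0` and `τ > 0`. -/
def IsSaddle (δ ρ P lam βs τs : ℝ) : Prop :=
  0 ≤ βs ∧ 0 < τs ∧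
  (∀ β, 0 ≤ β → Dfun δ ρ P lam β τs ≤ Dfun δ ρ P lam βs τs) ∧
  (∀ τ, 0 < τ → Dfun δ ρ P lam βs τs ≤ Dfun δ ρ P lam βs τ)

end

/-!
Write `F s = E[(H - s)² 1{H ≥ s}]`, `G s = (F s - 1/2) / s` and `s = √P (1/τ + 2λ/β)`, so that
`D(β, τ) = β ((τδ + ρ/τ)/2 - β/4 + √P G(s))`. At a saddle point with `β > 0` both partial
derivatives vanish:
`τ²δ = ρ + 2P G'(s)` and `β = τδ + ρ/τ + 2√P G(s) - (4λ/β) P G'(s)`.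
Integration by parts gives `G` in closed form, whence `G s = -2φ(0) + O(s)` and
`G' s = 1/2 + O(s)`. The identity `G s - s G' s = -2 s⁻¹ ∫₀ˢ φ ≥ -2φ(0)` controls the `λ`-term of
the second equation for every `β`, so `β ≥ 2√(ρδ) - 4φ(0)√P` holds a priori. Thus `s = O(1/√ρ)`,
and substituting this into the two equations yields the expansions, with `4φ(0) = 2√2/√π`.
-/

local notation "φ" => gaussianPDFReal 0 1

section GaussianDensity

lemma hasDerivAt_gaussianPDFReal (μ : ℝ) (v : NNReal) (x : ℝ) :
    HasDerivAt (gaussianPDFReal μ v) (-((x - μ) / v) * gaussianPDFReal μ v x) x := by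
  have exponent : HasDerivAt (fun y : ℝ => -(y - μ) ^ 2 / (2 * v)) (-((x - μ) / v)) x := by
    refine ((((hasDerivAt_id x).sub_const μ).pow 2).neg.div_const (2 * (v : ℝ))).congr_deriv ?_
    simp only [id]
    rw [show -(((2 : ℕ) : ℝ) * (x - μ) ^ (2 - 1) * 1) = 2 * -(x - μ) by norm_num; ring,
      mul_div_mul_left _ _ two_ne_zero, neg_div]
  rw [gaussianPDFReal_def]
  exact (exponent.exp.const_mul _).congr_deriv (by ring)

lemma hasDerivAt_stdGaussianPDF (x : ℝ) : HasDerivAt φ (-x * φ x) x := by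
  simpa using hasDerivAt_gaussianPDFReal 0 1 x

lemma continuous_gaussianPDFReal (μ : ℝ) (v : NNReal) : Continuous (gaussianPDFReal μ v) :=
  continuous_iff_continuousAt.2 fun x => (hasDerivAt_gaussianPDFReal μ v x).continuousAt

lemma gaussianPDFReal_le_mean (μ : ℝ) (v : NNReal) (x : ℝ) :
    gaussianPDFReal μ v x ≤ gaussianPDFReal μ v μ := by
  have exponent_nonpos : -(x - μ) ^ 2 / (2 * v) ≤ 0 :=
    div_nonpos_of_nonpos_of_nonneg (by linarith [sq_nonneg (x - μ)]) (by positivity)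
  simp only [gaussianPDFReal, sub_self, ne_eq, two_ne_zero, not_false_eq_true, zero_pow, neg_zero,
    zero_div]
  exact mul_le_mul_of_nonneg_left (Real.exp_le_exp.2 exponent_nonpos) (by positivity)

lemma stdGaussianPDF_pos (x : ℝ) : 0 < φ x :=
  gaussianPDFReal_pos 0 1 x one_ne_zero

lemma stdGaussianPDF_eq (x : ℝ) : φ x = (√(2 * Real.pi))⁻¹ * Real.exp (-(1 / 2) * x ^ 2) := by
  simp only [gaussianPDFReal, NNReal.coe_one, mul_one, sub_zero]
  ring_nf

lemma stdGaussianPDF_zero_le_half : φ 0 ≤ 1 / 2 := by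
  have two_le : (2 : ℝ) ≤ √(2 * Real.pi) :=
    Real.le_sqrt_of_sq_le (by linarith [Real.pi_gt_three])
  simpa [stdGaussianPDF_eq] using inv_anti₀ two_pos two_le

lemma four_mul_stdGaussianPDF_zero_mul_sqrt_le (P : ℝ) : 4 * φ 0 * √P ≤ 2 * √P := by
  gcongr
  linarith [stdGaussianPDF_zero_le_half]

lemma two_mul_sqrt_two_mul_div_sqrt_pi (P : ℝ) :
    2 * √(2 * P) / √Real.pi = 4 * φ 0 * √P := by
  have sqrt_two_ne : √(2 : ℝ) ≠ 0 := by positivity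
  have sqrt_pi_ne : √Real.pi ≠ 0 := (Real.sqrt_pos.2 Real.pi_pos).ne'
  simp only [stdGaussianPDF_eq, Real.sqrt_mul zero_le_two]
  field_simp
  norm_num [mul_comm]

lemma tendsto_sub_mul_stdGaussianPDF_atTop (c : ℝ) :
    Tendsto (fun x => (x - c) * φ x) atTop (nhds 0) := by
  have rpow_mul_exp (k : ℝ) :
      Tendsto (fun x : ℝ => x ^ k * Real.exp (-(1 / 2) * x ^ 2)) atTop (nhds 0) :=
    (rpow_mul_exp_neg_mul_sq_isLittleO_exp_neg (by norm_num) k).isBigO.trans_tendsto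
      (Real.tendsto_exp_atBot.comp (tendsto_id.const_mul_atTop_of_neg (by norm_num)))
  have combination :=
    ((rpow_mul_exp 1).sub ((rpow_mul_exp 0).const_mul c)).const_mul (√(2 * Real.pi))⁻¹
  simp only [Real.rpow_one, Real.rpow_zero, mul_zero, sub_zero] at combination
  refine combination.congr fun x => ?_
  rw [stdGaussianPDF_eq]
  ring

end GaussianDensity

lemma le_of_hasDerivAt_nonneg {f f' : ℝ → ℝ} {a b : ℝ} (hf : ∀ x, HasDerivAt f (f' x) x)
    (hf' : ∀ x, a ≤ x → 0 ≤ f' x) (hab : a ≤ b) : f a ≤ f b :=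
  monotoneOn_of_hasDerivWithinAt_nonneg (convex_Ici a)
    (fun x _ => (hf x).continuousAt.continuousWithinAt) (fun x _ => (hf x).hasDerivWithinAt)
    (fun x hx => hf' x (interior_subset hx)) Set.self_mem_Ici hab hab

section CentralMass

/-- The standard Gaussian mass of `[0, s]`, that is the standard normal cdf minus `1/2`. It is the
non-elementary ingredient of the closed form of the truncated second moment. -/
noncomputable def centralMass (s : ℝ) : ℝ := ∫ x in (0 : ℝ)..s, φ x

variable {s : ℝ}

lemma hasDerivAt_centralMass (s : ℝ) : HasDerivAt centralMass (φ s) s :=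
  ((continuous_gaussianPDFReal 0 1).integral_hasStrictDerivAt 0 s).hasDerivAt

lemma centralMass_zero : centralMass 0 = 0 :=
  intervalIntegral.integral_same

lemma integral_Ioi_stdGaussianPDF : ∫ x in Set.Ioi (0 : ℝ), φ x = 1 / 2 := by
  have sqrt_ne : √(2 * Real.pi) ≠ 0 := by positivity
  simp only [stdGaussianPDF_eq]
  rw [integral_const_mul, integral_gaussian_Ioi, show Real.pi / (1 / 2) = 2 * Real.pi by ring]
  field_simp

lemma tendsto_centralMass_atTop : Tendsto centralMass atTop (nhds (1 / 2)) := by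
  rw [← integral_Ioi_stdGaussianPDF]
  exact intervalIntegral_tendsto_integral_Ioi 0 (integrable_gaussianPDFReal 0 1).integrableOn
    tendsto_id

lemma monotone_centralMass : Monotone centralMass :=
  monotone_of_hasDerivAt_nonneg hasDerivAt_centralMass fun x => (stdGaussianPDF_pos x).le

lemma centralMass_le_half (s : ℝ) : centralMass s ≤ 1 / 2 :=
  monotone_centralMass.ge_of_tendsto tendsto_centralMass_atTop s

lemma centralMass_nonneg (hs : 0 ≤ s) : 0 ≤ centralMass s :=
  centralMass_zero ▸ monotone_centralMass hs

lemma centralMass_le_mul (hs : 0 ≤ s) : centralMass s ≤ s * φ 0 := by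
  have deriv_diff (x : ℝ) : HasDerivAt (fun x => x * φ 0 - centralMass x) (φ 0 - φ x) x :=
    (((hasDerivAt_id x).mul_const (φ 0)).sub (hasDerivAt_centralMass x)).congr_deriv (by simp)
  have diff_nonneg := le_of_hasDerivAt_nonneg deriv_diff
    (fun x _ => sub_nonneg.2 (gaussianPDFReal_le_mean 0 1 x)) hs
  simpa [centralMass_zero] using diff_nonneg

lemma mul_stdGaussianPDF_le_centralMass (hs : 0 ≤ s) : s * φ s ≤ centralMass s := by
  have deriv_diff (x : ℝ) : HasDerivAt (fun x => centralMass x - x * φ x) (x ^ 2 * φ x) x :=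
    ((hasDerivAt_centralMass x).sub
      ((hasDerivAt_id x).mul (hasDerivAt_stdGaussianPDF x))).congr_deriv (by simp; ring)
  have diff_nonneg := le_of_hasDerivAt_nonneg deriv_diff
    (fun x _ => mul_nonneg (sq_nonneg x) (stdGaussianPDF_pos x).le) hs
  simpa [centralMass_zero] using diff_nonneg

lemma centralMass_sub_le_sq_mul (hs : 0 ≤ s) :
    centralMass s - s * φ s ≤ s ^ 2 * centralMass s := by
  have deriv_diff (x : ℝ) :
      HasDerivAt (fun x => (x ^ 2 - 1) * centralMass x + x * φ x) (2 * x * centralMass x) x :=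
    ((((hasDerivAt_pow 2 x).sub_const 1).mul (hasDerivAt_centralMass x)).add
      ((hasDerivAt_id x).mul (hasDerivAt_stdGaussianPDF x))).congr_deriv (by simp; ring)
  have diff_nonneg := le_of_hasDerivAt_nonneg deriv_diff
    (fun x hx => mul_nonneg (by positivity) (centralMass_nonneg hx)) hs
  simp only [centralMass_zero, mul_zero, zero_mul, add_zero] at diff_nonneg
  linarith

lemma stdGaussianPDF_zero_le_add_mul_centralMass (hs : 0 ≤ s) :
    φ 0 ≤ φ s + s * centralMass s := by
  have deriv_sum (x : ℝ) : HasDerivAt (fun x => φ x + x * centralMass x) (centralMass x) x :=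
    ((hasDerivAt_stdGaussianPDF x).add
      ((hasDerivAt_id x).mul (hasDerivAt_centralMass x))).congr_deriv (by simp)
  simpa using le_of_hasDerivAt_nonneg deriv_sum (fun _ => centralMass_nonneg) hs

lemma two_mul_stdGaussianPDF_zero_mul_le (hs : 0 ≤ s) :
    2 * φ 0 * s ≤ (1 + s ^ 2) * centralMass s + s * φ s := by
  have deriv_diff (x : ℝ) :
      HasDerivAt (fun x => (1 + x ^ 2) * centralMass x + x * φ x - 2 * φ 0 * x)
        (2 * (φ x + x * centralMass x - φ 0)) x :=
    (((((hasDerivAt_pow 2 x).const_add 1).mul (hasDerivAt_centralMass x)).add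
      ((hasDerivAt_id x).mul (hasDerivAt_stdGaussianPDF x))).sub
        ((hasDerivAt_id x).const_mul (2 * φ 0))).congr_deriv (by simp; ring)
  have diff_nonneg := le_of_hasDerivAt_nonneg deriv_diff
    (fun x hx => by linarith [stdGaussianPDF_zero_le_add_mul_centralMass hx]) hs
  simpa [centralMass_zero] using diff_nonneg

end CentralMass

section TruncatedMoment

lemma hasDerivAt_truncatedMoment_antideriv (s x : ℝ) :
    HasDerivAt (fun x => (1 + s ^ 2) * centralMass x - (x - 2 * s) * φ x)
      ((x - s) ^ 2 * φ x) x :=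
  (((hasDerivAt_centralMass x).const_mul (1 + s ^ 2)).sub
    (((hasDerivAt_id x).sub_const (2 * s)).mul (hasDerivAt_stdGaussianPDF x))).congr_deriv
      (by simp; ring)

lemma integral_Ioi_sub_sq_mul_stdGaussianPDF (s : ℝ) :
    ∫ x in Set.Ioi s, (x - s) ^ 2 * φ x = (1 + s ^ 2) * (1 / 2 - centralMass s) - s * φ s := by
  rw [integral_Ioi_of_hasDerivAt_of_nonneg' (fun x _ => hasDerivAt_truncatedMoment_antideriv s x)
    (fun x _ => mul_nonneg (sq_nonneg _) (stdGaussianPDF_pos x).le)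
    ((tendsto_centralMass_atTop.const_mul _).sub (tendsto_sub_mul_stdGaussianPDF_atTop (2 * s)))]
  ring

lemma integral_Ici_sub_sq_stdGaussian (s : ℝ) :
    ∫ h in Set.Ici s, (h - s) ^ 2 ∂_root_.stdGaussian =
      (1 + s ^ 2) * (1 / 2 - centralMass s) - s * φ s := by
  rw [← integral_Ioi_sub_sq_mul_stdGaussianPDF, _root_.stdGaussian,
    gaussianReal_of_var_ne_zero _ one_ne_zero,
    setIntegral_withDensity_eq_setIntegral_toReal_smul (measurable_gaussianPDF 0 1)
      (ae_of_all _ fun _ => gaussianPDF_lt_top) _ measurableSet_Ici,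
    integral_Ici_eq_integral_Ioi]
  simp only [toReal_gaussianPDF, smul_eq_mul, mul_comm]

/-- The slope `G s = (F s - F 0) / s` of the truncated second moment
`F s = E[(H - s)² 1{H ≥ s}]`, where `F 0 = 1/2`; it is `0` at `s = 0` by the convention
`x / 0 = 0`. The objective `Dfun` depends on the Gaussian integral only through it. -/
noncomputable def momentSlope (s : ℝ) : ℝ :=
  ((∫ h in Set.Ici s, (h - s) ^ 2 ∂_root_.stdGaussian) - 1 / 2) / s

variable {s : ℝ}

lemma momentSlope_eq (hs : s ≠ 0) :
    momentSlope s = s * (1 / 2 - centralMass s) - centralMass s / s - φ s := by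
  rw [momentSlope, integral_Ici_sub_sq_stdGaussian]
  field_simp
  ring

lemma hasDerivAt_momentSlope (hs : s ≠ 0) :
    HasDerivAt momentSlope
      (1 / 2 - centralMass s + (centralMass s - s * φ s) / s ^ 2) s := by
  have closed_form : momentSlope =ᶠ[nhds s]
      fun x => x * (1 / 2 - centralMass x) - centralMass x / x - φ x :=
    (eventually_ne_nhds hs).mono fun x hx => momentSlope_eq hx
  refine HasDerivAt.congr_of_eventuallyEq ?_ closed_form
  refine ((((hasDerivAt_id s).mul ((hasDerivAt_centralMass s).const_sub (1 / 2))).sub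
    ((hasDerivAt_centralMass s).div (hasDerivAt_id s) hs)).sub
      (hasDerivAt_stdGaussianPDF s)).congr_deriv ?_
  simp only [id]
  field_simp
  ring

lemma differentiableAt_momentSlope (hs : s ≠ 0) : DifferentiableAt ℝ momentSlope s :=
  (hasDerivAt_momentSlope hs).differentiableAt

lemma half_sub_centralMass_le_deriv_momentSlope (hs : 0 < s) :
    1 / 2 - centralMass s ≤ deriv momentSlope s := by
  rw [(hasDerivAt_momentSlope hs.ne').deriv, le_add_iff_nonneg_right]
  exact div_nonneg (sub_nonneg.2 (mul_stdGaussianPDF_le_centralMass hs.le)) (sq_nonneg s)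

lemma deriv_momentSlope_nonneg (hs : 0 < s) : 0 ≤ deriv momentSlope s :=
  (sub_nonneg.2 (centralMass_le_half s)).trans (half_sub_centralMass_le_deriv_momentSlope hs)

lemma half_sub_le_deriv_momentSlope (hs : 0 < s) : (1 - s) / 2 ≤ deriv momentSlope s := by
  have mass_le : centralMass s ≤ s * (1 / 2) :=
    (centralMass_le_mul hs.le).trans (by gcongr; exact stdGaussianPDF_zero_le_half)
  linarith [half_sub_centralMass_le_deriv_momentSlope hs]

lemma deriv_momentSlope_le_half (hs : 0 < s) : deriv momentSlope s ≤ 1 / 2 := by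
  have quotient_le : (centralMass s - s * φ s) / s ^ 2 ≤ centralMass s := by
    rw [div_le_iff₀' (by positivity)]
    exact centralMass_sub_le_sq_mul hs.le
  rw [(hasDerivAt_momentSlope hs.ne').deriv]
  linarith

lemma momentSlope_sub_mul_deriv (hs : s ≠ 0) :
    momentSlope s - s * deriv momentSlope s = -2 * (centralMass s / s) := by
  rw [(hasDerivAt_momentSlope hs).deriv, momentSlope_eq hs]
  field_simp
  ring

lemma neg_two_mul_stdGaussianPDF_zero_le_momentSlope_sub_mul_deriv (hs : 0 < s) :
    -(2 * φ 0) ≤ momentSlope s - s * deriv momentSlope s := by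
  have average_le : centralMass s / s ≤ φ 0 := (div_le_iff₀' hs).2 (centralMass_le_mul hs.le)
  rw [momentSlope_sub_mul_deriv hs.ne']
  linarith

lemma neg_two_mul_stdGaussianPDF_zero_le_momentSlope (hs : 0 < s) :
    -(2 * φ 0) ≤ momentSlope s := by
  linarith [neg_two_mul_stdGaussianPDF_zero_le_momentSlope_sub_mul_deriv hs,
    mul_nonneg hs.le (deriv_momentSlope_nonneg hs)]

lemma momentSlope_le (hs : 0 < s) : momentSlope s ≤ s / 2 - 2 * φ 0 := by
  rw [momentSlope, integral_Ici_sub_sq_stdGaussian, div_le_iff₀ hs]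
  linarith [two_mul_stdGaussianPDF_zero_mul_le hs.le]

end TruncatedMoment

section Objective

/-- The truncation level `s = √P α(β, τ)`, with `α(β, τ) = 1/τ + 2λ/β`, at which the Gaussian
variable is cut in `Yfun`; it is the small parameter of the expansion as `ρ → ∞`. -/
noncomputable def threshold (P lam β τ : ℝ) : ℝ := √P * (1 / τ + 2 * lam / β)

variable {δ ρ P lam β τ : ℝ}

lemma threshold_pos (hP : 0 < P) (hlam : 0 ≤ lam) (hβ : 0 < β) (hτ : 0 < τ) :
    0 < threshold P lam β τ := by
  unfold threshold
  positivity

lemma hasDerivAt_threshold_tau (P lam β : ℝ) (hτ : τ ≠ 0) :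
    HasDerivAt (fun t => threshold P lam β t) (-(√P / τ ^ 2)) τ := by
  have inv_form : (fun t => threshold P lam β t) = fun t => √P * (t⁻¹ + 2 * lam / β) := by
    simp only [threshold, one_div]
  rw [inv_form]
  exact (((hasDerivAt_inv hτ).add_const _).const_mul √P).congr_deriv (by ring)

lemma hasDerivAt_threshold_beta (P lam τ : ℝ) (hβ : β ≠ 0) :
    HasDerivAt (fun b => threshold P lam b τ) (-(√P * (2 * lam) / β ^ 2)) β := by
  have inv_form : (fun b => threshold P lam b τ) = fun b => √P * (1 / τ + 2 * lam * b⁻¹) := by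
    simp only [threshold, div_eq_mul_inv]
  rw [inv_form]
  exact ((((hasDerivAt_inv hβ).const_mul (2 * lam)).const_add _).const_mul √P).congr_deriv
    (by ring)

lemma Dfun_eq_mul (hP : 0 < P) :
    Dfun δ ρ P lam β τ =
      β * ((τ * δ + ρ / τ) / 2 - β / 4 + √P * momentSlope (threshold P lam β τ)) := by
  have sqrt_ne : √P ≠ 0 := by positivity
  have Yfun_eq : Yfun P lam β τ = β * (√P * momentSlope (threshold P lam β τ)) := by
    rw [Yfun, momentSlope, threshold, mul_div_assoc', mul_div_mul_left _ _ sqrt_ne]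
    ring
  rw [Dfun, Yfun_eq]
  split_ifs with hβ
  · rw [hβ, zero_mul]
  · rw [mul_comm 2 τ, ← div_div]
    ring

lemma hasDerivAt_Dfun_tau (hP : 0 < P) (hτ : τ ≠ 0) (hs : threshold P lam β τ ≠ 0) :
    HasDerivAt (fun t => Dfun δ ρ P lam β t)
      (β * ((δ - ρ / τ ^ 2) / 2 - P * deriv momentSlope (threshold P lam β τ) / τ ^ 2)) τ := by
  have deriv_slope := (differentiableAt_momentSlope hs).hasDerivAt.comp τ
    (hasDerivAt_threshold_tau P lam β hτ)
  have deriv_linear := ((hasDerivAt_id τ).mul_const δ).add ((hasDerivAt_inv hτ).const_mul ρ)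
  have deriv_prod :=
    (((deriv_linear.div_const 2).sub_const (β / 4)).add (deriv_slope.const_mul √P)).const_mul β
  simp only [Dfun_eq_mul hP]
  refine deriv_prod.congr_deriv ?_
  linear_combination
    -β * deriv momentSlope (threshold P lam β τ) / τ ^ 2 * Real.sq_sqrt hP.le

lemma hasDerivAt_Dfun_beta (hP : 0 < P) (hβ : β ≠ 0) (hs : threshold P lam β τ ≠ 0) :
    HasDerivAt (fun b => Dfun δ ρ P lam b τ)
      ((τ * δ + ρ / τ) / 2 - β / 2 + √P * momentSlope (threshold P lam β τ)
        - 2 * lam / β * (P * deriv momentSlope (threshold P lam β τ))) β := by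
  have deriv_slope := (differentiableAt_momentSlope hs).hasDerivAt.comp β
    (hasDerivAt_threshold_beta P lam τ hβ)
  have deriv_linear := ((hasDerivAt_id β).div_const 4).const_sub ((τ * δ + ρ / τ) / 2)
  have deriv_prod := (hasDerivAt_id β).mul (deriv_linear.add (deriv_slope.const_mul √P))
  simp only [Dfun_eq_mul hP]
  refine deriv_prod.congr_deriv ?_
  simp only [id, Pi.add_apply, Function.comp]
  field_simp
  linear_combination (-16 * lam * deriv momentSlope (threshold P lam β τ)) * Real.sq_sqrt hP.le

end Objective

section Saddle

variable {δ ρ P lam β τ : ℝ}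

lemma IsSaddle.tau_pos (h : IsSaddle δ ρ P lam β τ) : 0 < τ := h.2.1

lemma IsSaddle.tau_stationary (h : IsSaddle δ ρ P lam β τ) (hP : 0 < P) (hlam : 0 ≤ lam)
    (hβ : 0 < β) :
    τ ^ 2 * δ = ρ + 2 * P * deriv momentSlope (threshold P lam β τ) := by
  have hτ := h.tau_pos
  have local_min : IsLocalMin (fun t => Dfun δ ρ P lam β t) τ :=
    (lt_mem_nhds hτ).mono h.2.2.2
  have deriv_zero := local_min.hasDerivAt_eq_zero
    (hasDerivAt_Dfun_tau hP hτ.ne' (threshold_pos hP hlam hβ hτ).ne')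
  have factor_zero := (mul_eq_zero.1 deriv_zero).resolve_left hβ.ne'
  field_simp at factor_zero
  linarith

lemma IsSaddle.beta_stationary (h : IsSaddle δ ρ P lam β τ) (hP : 0 < P) (hlam : 0 ≤ lam)
    (hβ : 0 < β) :
    β = τ * δ + ρ / τ + 2 * √P * momentSlope (threshold P lam β τ)
      - 2 * (2 * lam / β * (P * deriv momentSlope (threshold P lam β τ))) := by
  have local_max : IsLocalMax (fun b => Dfun δ ρ P lam b τ) β :=
    (lt_mem_nhds hβ).mono fun b hb => h.2.2.1 b hb.le
  have deriv_zero := local_max.hasDerivAt_eq_zero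
    (hasDerivAt_Dfun_beta hP hβ.ne' (threshold_pos hP hlam hβ h.tau_pos).ne')
  linarith

lemma IsSaddle.beta_pos (h : IsSaddle δ ρ P lam β τ) (hP : 0 < P) (hlam : 0 ≤ lam)
    (hgap : 4 * φ 0 * √P < τ * δ + ρ / τ) : 0 < β := by
  refine h.1.lt_of_ne fun hβ => ?_
  obtain ⟨b, hb⟩ : ∃ b, b = τ * δ + ρ / τ - 4 * φ 0 * √P := ⟨_, rfl⟩
  have b_pos : 0 < b := by linarith
  have slope_ge : √P * -(2 * φ 0) ≤ √P * momentSlope (threshold P lam b τ) := by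
    gcongr
    exact neg_two_mul_stdGaussianPDF_zero_le_momentSlope
      (threshold_pos hP hlam b_pos h.tau_pos)
  have value_pos : 0 < Dfun δ ρ P lam b τ := by
    rw [Dfun_eq_mul hP]
    exact mul_pos b_pos (by linarith)
  have value_nonpos : Dfun δ ρ P lam b τ ≤ 0 := by
    simpa [← hβ, Dfun] using h.2.2.1 b b_pos.le
  exact value_nonpos.not_gt value_pos

lemma IsSaddle.sub_le_beta (h : IsSaddle δ ρ P lam β τ) (hP : 0 < P) (hlam : 0 ≤ lam)
    (hβ : 0 < β) : τ * δ + ρ / τ - 4 * φ 0 * √P ≤ β := by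
  have hτ := h.tau_pos
  have stationary := h.beta_stationary hP hlam hβ
  have s_pos := threshold_pos hP hlam hβ hτ
  have lam_part_le : √P * (2 * lam / β) ≤ threshold P lam β τ := by
    rw [threshold, mul_add]
    have : 0 ≤ √P * (1 / τ) := by positivity
    linarith
  generalize threshold P lam β τ = s at *
  have lam_term_le : 2 * lam / β * (P * deriv momentSlope s) ≤ √P * (s * deriv momentSlope s) :=
    calc 2 * lam / β * (P * deriv momentSlope s)
        = √P * (√P * (2 * lam / β) * deriv momentSlope s) := by
          linear_combination (-(2 * lam / β) * deriv momentSlope s) * Real.sq_sqrt hP.le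
      _ ≤ √P * (s * deriv momentSlope s) := by
          gcongr
          exact deriv_momentSlope_nonneg s_pos
  have slope_ge : √P * -(2 * φ 0) ≤ √P * (momentSlope s - s * deriv momentSlope s) := by
    gcongr
    exact neg_two_mul_stdGaussianPDF_zero_le_momentSlope_sub_mul_deriv s_pos
  linarith

lemma IsSaddle.beta_le (h : IsSaddle δ ρ P lam β τ) (hP : 0 < P) (hlam : 0 ≤ lam)
    (hβ : 0 < β) :
    β ≤ τ * δ + ρ / τ - 4 * φ 0 * √P + √P * threshold P lam β τ := by
  have stationary := h.beta_stationary hP hlam hβ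
  have s_pos := threshold_pos hP hlam hβ h.tau_pos
  generalize threshold P lam β τ = s at *
  have lam_term_nonneg : 0 ≤ 2 * lam / β * (P * deriv momentSlope s) := by
    have := deriv_momentSlope_nonneg s_pos
    positivity
  have slope_le : √P * momentSlope s ≤ √P * (s / 2 - 2 * φ 0) := by
    gcongr
    exact momentSlope_le s_pos
  linarith

lemma IsSaddle.le_sq_tau_mul (h : IsSaddle δ ρ P lam β τ) (hP : 0 < P) (hlam : 0 ≤ lam)
    (hβ : 0 < β) : ρ ≤ τ ^ 2 * δ := by
  have slope_nonneg := deriv_momentSlope_nonneg (threshold_pos hP hlam hβ h.tau_pos)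
  rw [h.tau_stationary hP hlam hβ, le_add_iff_nonneg_right]
  positivity

lemma IsSaddle.sq_tau_mul_le (h : IsSaddle δ ρ P lam β τ) (hP : 0 < P) (hlam : 0 ≤ lam)
    (hβ : 0 < β) : τ ^ 2 * δ ≤ ρ + P := by
  have slope_le := mul_le_mul_of_nonneg_left
    (deriv_momentSlope_le_half (threshold_pos hP hlam hβ h.tau_pos)) hP.le
  linarith [h.tau_stationary hP hlam hβ]

lemma IsSaddle.sub_threshold_le_sq_tau_mul (h : IsSaddle δ ρ P lam β τ) (hP : 0 < P)
    (hlam : 0 ≤ lam) (hβ : 0 < β) :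
    ρ + P - P * threshold P lam β τ ≤ τ ^ 2 * δ := by
  have slope_ge := mul_le_mul_of_nonneg_left
    (half_sub_le_deriv_momentSlope (threshold_pos hP hlam hβ h.tau_pos)) hP.le
  linarith [h.tau_stationary hP hlam hβ]

end Saddle

section Elementary

variable {δ ρ P τ : ℝ}

lemma add_div_eq_two_mul_sqrt_add (hδ : 0 ≤ δ) (hρ : 0 ≤ ρ) (hτ : 0 < τ) :
    τ * δ + ρ / τ = 2 * √(ρ * δ) + (τ * √δ - √ρ) ^ 2 / τ := by
  rw [Real.sqrt_mul hρ]
  field_simp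
  linear_combination (-τ ^ 2) * Real.sq_sqrt hδ - Real.sq_sqrt hρ

lemma two_mul_sqrt_mul_le_add_div (hδ : 0 ≤ δ) (hρ : 0 ≤ ρ) (hτ : 0 < τ) :
    2 * √(ρ * δ) ≤ τ * δ + ρ / τ := by
  rw [add_div_eq_two_mul_sqrt_add hδ hρ hτ, le_add_iff_nonneg_right]
  positivity

lemma sqrt_le_mul_sqrt (hτ : 0 ≤ τ) (hle : ρ ≤ τ ^ 2 * δ) : √ρ ≤ τ * √δ := by
  simpa [Real.sqrt_mul (sq_nonneg τ), Real.sqrt_sq hτ] using Real.sqrt_le_sqrt hle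

lemma add_div_le_two_mul_sqrt_add (hδ : 0 < δ) (hρ : 0 < ρ) (hτ : 0 < τ)
    (hlower : ρ ≤ τ ^ 2 * δ) (hupper : τ ^ 2 * δ ≤ ρ + P) :
    τ * δ + ρ / τ ≤ 2 * √(ρ * δ) + P ^ 2 * √δ / (ρ * √ρ) := by
  have hr : 0 < √ρ := by positivity
  have r_sq : √ρ ^ 2 = ρ := Real.sq_sqrt hρ.le
  have d_sq : √δ ^ 2 = δ := Real.sq_sqrt hδ.le
  have r_le := sqrt_le_mul_sqrt hτ.le hlower
  have gap_le : (τ * √δ - √ρ) * √ρ ≤ P := by nlinarith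
  have gap_sq_le : (τ * √δ - √ρ) ^ 2 * ρ ≤ P ^ 2 := by
    calc (τ * √δ - √ρ) ^ 2 * ρ = ((τ * √δ - √ρ) * √ρ) ^ 2 := by rw [mul_pow, r_sq]
      _ ≤ P ^ 2 := pow_le_pow_left₀ (mul_nonneg (sub_nonneg.2 r_le) hr.le) gap_le 2
  rw [add_div_eq_two_mul_sqrt_add hδ.le hρ.le hτ, add_le_add_iff_left,
    div_le_div_iff₀ hτ (by positivity)]
  calc (τ * √δ - √ρ) ^ 2 * (ρ * √ρ) = (τ * √δ - √ρ) ^ 2 * ρ * √ρ := by ring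
    _ ≤ P ^ 2 * (τ * √δ) := by gcongr
    _ = P ^ 2 * √δ * τ := by ring

lemma sq_sqrt_div_add_div_mul (P : ℝ) (hδ : 0 < δ) (hρ : 0 < ρ) :
    (√(ρ / δ) + P / (2 * √(δ * ρ))) ^ 2 * δ = ρ + P + P ^ 2 / (4 * ρ) := by
  have sqrt_form {d r : ℝ} (hd : 0 < d) (hr : 0 < r) :
      (r / d + P / (2 * (d * r))) ^ 2 * d ^ 2 = r ^ 2 + P + P ^ 2 / (4 * r ^ 2) := by
    field_simp
    ring
  simpa [Real.sqrt_div hρ.le, Real.sqrt_mul hδ.le, Real.sq_sqrt, hδ.le, hρ.le] using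
    sqrt_form (Real.sqrt_pos.2 hδ) (Real.sqrt_pos.2 hρ)

lemma abs_sub_sqrt_div_add_div_le {ε : ℝ} (hδ : 0 < δ) (hρ : 0 < ρ) (hP : 0 ≤ P) (hτ : 0 < τ)
    (hlower : ρ + P - ε ≤ τ ^ 2 * δ) (hupper : τ ^ 2 * δ ≤ ρ + P) :
    |τ - (√(ρ / δ) + P / (2 * √(δ * ρ)))| ≤ (P ^ 2 / ρ + ε) / (√δ * √ρ) := by
  have T_sq := sq_sqrt_div_add_div_mul P hδ hρ
  have T_pos : 0 < √(ρ / δ) + P / (2 * √(δ * ρ)) := by positivity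
  generalize √(ρ / δ) + P / (2 * √(δ * ρ)) = T at T_sq T_pos ⊢
  have quarter_nonneg : 0 ≤ P ^ 2 / (4 * ρ) := by positivity
  have quarter_le : P ^ 2 / (4 * ρ) ≤ P ^ 2 / ρ := by
    gcongr
    linarith
  have le_sum_mul : √δ * √ρ ≤ (T + τ) * δ :=
    calc √δ * √ρ ≤ √δ * (T * √δ) := by
          gcongr
          exact sqrt_le_mul_sqrt T_pos.le (by linarith)
      _ = T * δ := by linear_combination T * Real.sq_sqrt hδ.le
      _ ≤ (T + τ) * δ := by gcongr; linarith
  have product_eq : (T - τ) * ((T + τ) * δ) = T ^ 2 * δ - τ ^ 2 * δ := by ring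
  have diff_nonneg : 0 ≤ T - τ :=
    nonneg_of_mul_nonneg_left (by rw [product_eq]; linarith) (by positivity : 0 < (T + τ) * δ)
  rw [abs_sub_comm, abs_of_nonneg diff_nonneg, le_div_iff₀ (by positivity)]
  calc (T - τ) * (√δ * √ρ) ≤ (T - τ) * ((T + τ) * δ) := by gcongr
    _ ≤ P ^ 2 / ρ + ε := by rw [product_eq]; linarith

end Elementary

section Expansion

variable {δ ρ P lam β τ : ℝ}

lemma IsSaddle.beta_pos_of_large (h : IsSaddle δ ρ P lam β τ) (hδ : 0 ≤ δ) (hρ : 0 ≤ ρ)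
    (hP : 0 < P) (hlam : 0 ≤ lam) (hlarge : 2 * √P ≤ √(ρ * δ)) : 0 < β := by
  have sqrt_pos : 0 < √P := by positivity
  refine h.beta_pos hP hlam ?_
  linarith [four_mul_stdGaussianPDF_zero_mul_sqrt_le P,
    two_mul_sqrt_mul_le_add_div hδ hρ h.tau_pos]

lemma IsSaddle.threshold_le (h : IsSaddle δ ρ P lam β τ) (hδ : 0 < δ) (hρ : 0 < ρ)
    (hP : 0 < P) (hlam : 0 ≤ lam) (hlarge : 2 * √P ≤ √(ρ * δ)) :
    threshold P lam β τ ≤ √P * (√δ + 2 * lam / √δ) / √ρ := by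
  have hτ := h.tau_pos
  have hβ := h.beta_pos_of_large hδ.le hρ.le hP hlam hlarge
  have inv_tau_le : 1 / τ ≤ √δ / √ρ := by
    rw [div_le_div_iff₀ hτ (by positivity)]
    linarith [sqrt_le_mul_sqrt hτ.le (h.le_sq_tau_mul hP hlam hβ)]
  have le_beta : √ρ * √δ ≤ β := by
    rw [← Real.sqrt_mul hρ.le]
    linarith [h.sub_le_beta hP hlam hβ, four_mul_stdGaussianPDF_zero_mul_sqrt_le P,
      two_mul_sqrt_mul_le_add_div hδ.le hρ.le hτ]
  calc threshold P lam β τ ≤ √P * (√δ / √ρ + 2 * lam / (√ρ * √δ)) := by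
        unfold threshold
        gcongr
    _ = √P * (√δ + 2 * lam / √δ) / √ρ := by field_simp

lemma IsSaddle.abs_tau_sub_le (h : IsSaddle δ ρ P lam β τ) (hδ : 0 < δ) (hρ : 1 ≤ ρ)
    (hP : 0 < P) (hlam : 0 ≤ lam) (hlarge : 2 * √P ≤ √(ρ * δ)) :
    |τ - (√(ρ / δ) + P / (2 * √(δ * ρ)))|
      ≤ (P ^ 2 + P * √P * (√δ + 2 * lam / √δ)) / √δ / ρ := by
  have ρ_pos : 0 < ρ := by linarith
  have hβ := h.beta_pos_of_large hδ.le ρ_pos.le hP hlam hlarge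
  have sqrt_le : √ρ ≤ ρ := Real.sqrt_le_iff.2 ⟨ρ_pos.le, le_self_pow₀ hρ two_ne_zero⟩
  calc |τ - (√(ρ / δ) + P / (2 * √(δ * ρ)))|
      ≤ (P ^ 2 / ρ + P * threshold P lam β τ) / (√δ * √ρ) :=
        abs_sub_sqrt_div_add_div_le hδ ρ_pos hP.le h.tau_pos
          (h.sub_threshold_le_sq_tau_mul hP hlam hβ) (h.sq_tau_mul_le hP hlam hβ)
    _ ≤ (P ^ 2 / √ρ + P * (√P * (√δ + 2 * lam / √δ) / √ρ)) / (√δ * √ρ) := by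
        gcongr
        exact h.threshold_le hδ ρ_pos hP hlam hlarge
    _ = (P ^ 2 + P * √P * (√δ + 2 * lam / √δ)) / √δ / (√ρ * √ρ) := by
        field_simp
    _ = (P ^ 2 + P * √P * (√δ + 2 * lam / √δ)) / √δ / ρ := by
        rw [Real.mul_self_sqrt ρ_pos.le]

lemma IsSaddle.abs_beta_sub_le (h : IsSaddle δ ρ P lam β τ) (hδ : 0 < δ) (hρ : 1 ≤ ρ)
    (hP : 0 < P) (hlam : 0 ≤ lam) (hlarge : 2 * √P ≤ √(ρ * δ)) :
    |β - (2 * √(ρ * δ) - 4 * φ 0 * √P)|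
      ≤ (P ^ 2 * √δ + P * (√δ + 2 * lam / √δ)) / √ρ := by
  have ρ_pos : 0 < ρ := by linarith
  have hβ := h.beta_pos_of_large hδ.le ρ_pos.le hP hlam hlarge
  have τ_pos := h.tau_pos
  have lower := h.sub_le_beta hP hlam hβ
  have sum_ge := two_mul_sqrt_mul_le_add_div hδ.le ρ_pos.le τ_pos
  have upper := h.beta_le hP hlam hβ
  have sum_le := add_div_le_two_mul_sqrt_add hδ ρ_pos τ_pos
    (h.le_sq_tau_mul hP hlam hβ) (h.sq_tau_mul_le hP hlam hβ)
  rw [abs_of_nonneg (by linarith)]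
  calc β - (2 * √(ρ * δ) - 4 * φ 0 * √P)
      ≤ P ^ 2 * √δ / (ρ * √ρ) + √P * threshold P lam β τ := by linarith
    _ ≤ P ^ 2 * √δ / (1 * √ρ) + √P * (√P * (√δ + 2 * lam / √δ) / √ρ) := by
        gcongr
        exact h.threshold_le hδ ρ_pos hP hlam hlarge
    _ = (P ^ 2 * √δ + √P * √P * (√δ + 2 * lam / √δ)) / √ρ := by ring
    _ = (P ^ 2 * √δ + P * (√δ + 2 * lam / √δ)) / √ρ := by rw [Real.mul_self_sqrt hP.le]

end Expansion

theorem saddle_point_expansion_rho_infty_general {δ P lam : ℝ}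
    (hδ : 0 < δ) (hP : 0 < P) (hlam : 0 ≤ lam) :
    ∃ C > (0 : ℝ), ∃ ρ₀ > (0 : ℝ), ∀ ρ : ℝ, ρ₀ ≤ ρ → ∀ β τ : ℝ, IsSaddle δ ρ P lam β τ →
      |τ - (√(ρ / δ) + P / (2 * √(δ * ρ)))| ≤ C / ρ ∧
      |β - (2 * √(ρ * δ) - 2 * √(2 * P) / √Real.pi)| ≤ C / √ρ := by
  refine ⟨max ((P ^ 2 + P * √P * (√δ + 2 * lam / √δ)) / √δ)
    (P ^ 2 * √δ + P * (√δ + 2 * lam / √δ)), lt_max_of_lt_right (by positivity),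
    max 1 (4 * P / δ), by positivity, fun ρ hρ β τ h => ?_⟩
  obtain ⟨one_le_ρ, ρ_large⟩ := max_le_iff.1 hρ
  have hlarge : 2 * √P ≤ √(ρ * δ) := by
    refine Real.le_sqrt_of_sq_le ?_
    rw [mul_pow, Real.sq_sqrt hP.le]
    linarith [(div_le_iff₀ hδ).1 ρ_large]
  rw [two_mul_sqrt_two_mul_div_sqrt_pi]
  constructor
  · refine (h.abs_tau_sub_le hδ one_le_ρ hP hlam hlarge).trans ?_
    gcongr
    exact le_max_left _ _
  · refine (h.abs_beta_sub_le hδ one_le_ρ hP hlam hlarge).trans ?_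
    gcongr
    exact le_max_right _ _

/-- as `ρ → ∞`, `τ*(ρ) = √(ρ/δ) + P/(2√(δρ)) + O(1/ρ)` and
`β*(ρ) = 2√(ρδ) − 2√(2P)/√π + O(1/√ρ)`. -/
theorem saddle_point_expansion_rho_infty (δ P lam : ℝ)
    (hδ : 0 < δ) (hP : 0 < P) (hlam : 0 ≤ lam)
    (hcase : 0 < lam ∨ (lam = 0 ∧ 1 < δ))
    (βs τs : ℝ → ℝ)
    (hsad : ∀ ρ : ℝ, 0 < ρ → IsSaddle δ ρ P lam (βs ρ) (τs ρ)) :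
    ∃ C > (0 : ℝ), ∃ ρ₀ > (0 : ℝ), ∀ ρ : ℝ, ρ₀ ≤ ρ →
      |τs ρ - (Real.sqrt (ρ / δ) + P / (2 * Real.sqrt (δ * ρ)))| ≤ C / ρ ∧
      |βs ρ - (2 * Real.sqrt (ρ * δ) - 2 * Real.sqrt (2 * P) / Real.sqrt Real.pi)| ≤
        C / Real.sqrt ρ := by
  obtain ⟨C, hC, ρ₀, hρ₀, bounds⟩ := saddle_point_expansion_rho_infty_general hδ hP hlam
  exact ⟨C, hC, ρ₀, hρ₀, fun ρ hρ => bounds ρ hρ _ _ (hsad ρ (hρ₀.trans_le hρ))⟩
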